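/- For every ℏ > 0, the closure in operator norm of the linear span of the set { T_{k,g,ℏ} : k ∈ ℤⁿ, g : ℝⁿ → ℂ a Schwartz function } equals the space of all compact operators on ℓ²(ℤⁿ). -/

import Mathlib

open scoped Real
open Filter MeasureTheory

noncomputable section

/-- `ℓ²(ℤⁿ)` with values in `ℂ`. -/
abbrev ℓ2 (n : ℕ) := lp (fun _ : Fin n → ℤ => ℂ) 2

open scoped Topology ContDiff
open InnerProductSpace

/-- A uniformly bounded net of operators converging strongly to the identity converges to it
uniformly on the image of the unit ball under a compact operator. -/
theorem IsCompactOperator.tendsto_comp {𝕜 E F α : Type*} [RCLike 𝕜]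
    [NormedAddCommGroup E] [NormedSpace 𝕜 E] [NormedAddCommGroup F] [NormedSpace 𝕜 F]
    {l : Filter α} {P : α → F →L[𝕜] F} {T : E →L[𝕜] F} (hT : IsCompactOperator T)
    (hP : ∀ i, ‖P i‖ ≤ 1) (hPx : ∀ x, Tendsto (fun i => P i x) l (𝓝 x)) :
    Tendsto (fun i => P i ∘L T) l (𝓝 T) := by
  rw [Metric.tendsto_nhds]
  intro ε hε
  have hTK : IsCompactOperator (T : E →ₗ[𝕜] F) := hT
  obtain ⟨K, hK, hTB⟩ := hTK.image_closedBall_subset_compact 1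
  obtain ⟨t, ht, hKt⟩ := Metric.totallyBounded_iff.1 hK.totallyBounded (ε / 4) (by positivity)
  have hev : ∀ᶠ i in l, ∀ y ∈ t, dist (P i y) y < ε / 4 :=
    (eventually_all_finite ht).2 fun y _ => Metric.tendsto_nhds.1 (hPx y) _ (by positivity)
  filter_upwards [hev] with i hi
  rw [dist_eq_norm]
  refine lt_of_le_of_lt (ContinuousLinearMap.opNorm_le_of_unit_norm (C := 3 * (ε / 4))
    (by positivity) fun x hx => ?_) (by linarith)
  have hxK : T x ∈ K := hTB ⟨x, by simp [hx], rfl⟩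
  obtain ⟨y, hy, hxy⟩ := Set.mem_iUnion₂.1 (hKt hxK)
  rw [Metric.mem_ball] at hxy
  have hPxy : dist (P i (T x)) (P i y) ≤ dist (T x) y := by
    rw [dist_eq_norm, dist_eq_norm, ← map_sub]
    exact (P i).le_of_opNorm_le (hP i) _ |>.trans_eq (one_mul _)
  change ‖P i (T x) - T x‖ ≤ _
  rw [← dist_eq_norm]
  linarith [dist_triangle4_right (P i (T x)) (T x) (P i y) y, hi y hy]

section Coordinates

variable {ι : Type*}

/-- An operator whose matrix is supported on a shifted diagonal has norm at most the supremum of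
its entries. -/
theorem lp.opNorm_le_of_forall_apply_le {S : lp (fun _ : ι => ℂ) 2 →L[ℂ] lp (fun _ : ι => ℂ) 2}
    (σ : ι ≃ ι) {C : ℝ} (hC : 0 ≤ C) (hS : ∀ φ a, ‖S φ a‖ ≤ C * ‖φ (σ a)‖) : ‖S‖ ≤ C := by
  refine S.opNorm_le_bound hC fun φ => ?_
  refine lp.norm_le_of_forall_sum_le (by norm_num) (by positivity) fun s => ?_
  calc ∑ a ∈ s, ‖S φ a‖ ^ (2 : ENNReal).toReal
      ≤ ∑ a ∈ s, C ^ (2 : ENNReal).toReal * ‖φ (σ a)‖ ^ (2 : ENNReal).toReal := by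
        refine Finset.sum_le_sum fun a _ => ?_
        rw [← Real.mul_rpow hC (norm_nonneg _)]
        exact Real.rpow_le_rpow (norm_nonneg _) (hS φ a) (by norm_num)
    _ = C ^ (2 : ENNReal).toReal *
          ∑ a ∈ s.map σ.toEmbedding, ‖φ a‖ ^ (2 : ENNReal).toReal := by
        rw [Finset.sum_map, Finset.mul_sum]; rfl
    _ ≤ C ^ (2 : ENNReal).toReal * ‖φ‖ ^ (2 : ENNReal).toReal := by
        gcongr
        exact lp.sum_rpow_le_norm_rpow (by norm_num) φ _
    _ = (C * ‖φ‖) ^ (2 : ENNReal).toReal := (Real.mul_rpow hC (norm_nonneg _)).symm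

variable [DecidableEq ι]

/-- The matrix unit with a one in position `(a, b)`. -/
def matrixUnit (a b : ι) : lp (fun _ : ι => ℂ) 2 →L[ℂ] lp (fun _ : ι => ℂ) 2 :=
  rankOne ℂ (lp.single 2 a (1 : ℂ)) (lp.single 2 b (1 : ℂ))

theorem matrixUnit_apply (a b : ι) (φ : lp (fun _ : ι => ℂ) 2) :
    matrixUnit a b φ = φ b • (lp.single 2 a (1 : ℂ) : lp (fun _ : ι => ℂ) 2) := by
  simp [matrixUnit, lp.inner_single_left]

theorem isCompactOperator_rankOne {E F : Type*} [NormedAddCommGroup E] [InnerProductSpace ℂ E]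
    [NormedAddCommGroup F] [InnerProductSpace ℂ F] (x : E) (y : F) :
    IsCompactOperator (rankOne ℂ x y) := by
  rw [rankOne_def']
  exact (isCompactOperator_of_locallyCompactSpace_dom (innerSL ℂ y)).clm_comp
    (ContinuousLinearMap.toSpanSingleton ℂ x)

/-- The projection onto the coordinates in a finite set. -/
def coordProj (s : Finset ι) : lp (fun _ : ι => ℂ) 2 →L[ℂ] lp (fun _ : ι => ℂ) 2 :=
  ∑ a ∈ s, matrixUnit a a

theorem coordProj_eq_sum_single (s : Finset ι) (φ : lp (fun _ : ι => ℂ) 2) :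
    coordProj s φ = ∑ a ∈ s, lp.single 2 a (φ a) := by
  simp only [coordProj, sum_apply, matrixUnit_apply]
  refine Finset.sum_congr rfl fun a _ => ?_
  rw [← lp.single_smul]
  simp

theorem coordProj_apply (s : Finset ι) (φ : lp (fun _ : ι => ℂ) 2) (a : ι) :
    coordProj s φ a = if a ∈ s then φ a else 0 := by
  rw [coordProj_eq_sum_single, lp.coeFn_sum, Finset.sum_apply]
  simp [Pi.single_apply]

theorem norm_coordProj_le (s : Finset ι) : ‖coordProj s‖ ≤ 1 := by
  refine lp.opNorm_le_of_forall_apply_le (Equiv.refl ι) zero_le_one fun φ a => ?_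
  rw [coordProj_apply]
  split_ifs <;> simp

theorem tendsto_coordProj (φ : lp (fun _ : ι => ℂ) 2) :
    Tendsto (fun s : Finset ι => coordProj s φ) atTop (𝓝 φ) := by
  simp only [coordProj_eq_sum_single]
  exact lp.hasSum_single (by norm_num) φ

theorem isCompactOperator_coordProj (s : Finset ι) : IsCompactOperator (coordProj s) :=
  (compactOperator (RingHom.id ℂ) _ _).sum_mem fun _ _ => isCompactOperator_rankOne _ _

/-- A weighted permutation operator whose weights vanish at infinity is compact. -/
theorem isCompactOperator_of_tendsto_zero
    {T : lp (fun _ : ι => ℂ) 2 →L[ℂ] lp (fun _ : ι => ℂ) 2} (σ : ι ≃ ι) {w : ι → ℂ}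
    (hT : ∀ φ a, T φ a = w a * φ (σ a)) (hw : Tendsto w cofinite (𝓝 0)) :
    IsCompactOperator T := by
  refine isCompactOperator_of_tendsto (l := atTop) (F := fun s => coordProj s ∘L T) ?_
    (Eventually.of_forall fun s => (isCompactOperator_coordProj s).comp_clm T)
  rw [Metric.tendsto_atTop]
  intro ε hε
  have hfin : {a | ¬ ‖w a‖ < ε / 2}.Finite := by
    have := (Metric.tendsto_nhds.1 hw) (ε / 2) (by positivity)
    simpa [dist_zero_right] using this
  refine ⟨hfin.toFinset, fun s hs => ?_⟩
  rw [dist_eq_norm]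
  refine lt_of_le_of_lt (lp.opNorm_le_of_forall_apply_le σ (C := ε / 2) (by positivity)
    fun φ a => ?_) (half_lt_self hε)
  have h : (coordProj s ∘L T - T) φ a = (if a ∈ s then T φ a else 0) - T φ a := by
    rw [← coordProj_apply]; rfl
  rw [h, hT]
  split_ifs with ha
  · rw [sub_self, norm_zero]; positivity
  · rw [zero_sub, norm_neg, norm_mul]
    gcongr
    by_contra hcon
    exact ha (hs (by simpa using fun h' : ‖w a‖ < ε / 2 => hcon h'.le))

/-- A closed subspace containing all matrix units contains all compact operators. -/
theorem mem_of_isCompactOperator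
    {V : Submodule ℂ (lp (fun _ : ι => ℂ) 2 →L[ℂ] lp (fun _ : ι => ℂ) 2)}
    (hV : IsClosed (V : Set (lp (fun _ : ι => ℂ) 2 →L[ℂ] lp (fun _ : ι => ℂ) 2)))
    (hunit : ∀ a b, matrixUnit a b ∈ V)
    {T : lp (fun _ : ι => ℂ) 2 →L[ℂ] lp (fun _ : ι => ℂ) 2} (hT : IsCompactOperator T) :
    T ∈ V := by
  have hrank : ∀ a y, rankOne ℂ (lp.single 2 a (1 : ℂ) : lp (fun _ : ι => ℂ) 2) y ∈ V := by
    intro a y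
    refine hV.mem_of_tendsto (((rankOne ℂ _).continuous.tendsto y).comp (tendsto_coordProj y))
      (Eventually.of_forall fun s => ?_)
    simp only [Function.comp, coordProj, sum_apply, matrixUnit_apply, map_sum,
      map_smulₛₗ]
    exact V.sum_mem fun b _ => V.smul_mem _ (hunit a b)
  refine hV.mem_of_tendsto (hT.tendsto_comp norm_coordProj_le tendsto_coordProj)
    (Eventually.of_forall fun s => ?_)
  simp only [coordProj, ContinuousLinearMap.finsetSum_comp, matrixUnit, rankOne_comp]
  exact V.sum_mem fun b _ => hrank b _

end Coordinates

theorem tendsto_scaled_lattice (n : ℕ) {ℏ : ℝ} (hℏ : 0 < ℏ) (k : Fin n → ℤ) :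
    Tendsto (fun (a : Fin n → ℤ) (i : Fin n) => π * ℏ * (2 * (a i : ℝ) - (k i : ℝ)))
      cofinite (cocompact (Fin n → ℝ)) := by
  rw [← coprodᵢ_cocompact, ← coprodᵢ_cofinite]
  refine Tendsto.pi_map_coprodᵢ (m := fun i (m : ℤ) => π * ℏ * (2 * (m : ℝ) - (k i : ℝ)))
    fun i => ?_
  have hc : 2 * (π * ℏ) ≠ 0 := by positivity
  have h := ((Homeomorph.mulLeft₀ _ hc).trans
    (Homeomorph.addRight (-(π * ℏ * k i)))).isClosedEmbedding.tendsto_cocompact.comp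
      Int.tendsto_coe_cofinite
  refine h.congr fun m => ?_
  simp
  ring

/-- Schwartz functions separate a lattice point from all the others. -/
theorem exists_schwartzMap_lattice (n : ℕ) {ℏ : ℝ} (hℏ : 0 < ℏ) (k b : Fin n → ℤ) :
    ∃ g : SchwartzMap (Fin n → ℝ) ℂ, ∀ a : Fin n → ℤ,
      g (fun i => π * ℏ * (2 * (a i : ℝ) - (k i : ℝ))) = if a = b then 1 else 0 := by
  have hc : 0 < π * ℏ := by positivity
  let f : ContDiffBump (fun i => π * ℏ * (2 * (b i : ℝ) - (k i : ℝ))) :=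
    ⟨π * ℏ / 2, π * ℏ, by positivity, by linarith⟩
  have hsupp : HasCompactSupport fun x => (f x : ℂ) :=
    f.hasCompactSupport.comp_left Complex.ofReal_zero
  have hsmooth : ContDiff ℝ ∞ fun x => (f x : ℂ) := Complex.ofRealCLM.contDiff.comp f.contDiff
  refine ⟨hsupp.toSchwartzMap hsmooth, fun a => ?_⟩
  change (f _ : ℂ) = _
  split_ifs with hab
  · subst hab
    rw [f.one_of_mem_closedBall (Metric.mem_closedBall_self f.rIn_pos.le), Complex.ofReal_one]
  · obtain ⟨i, hi⟩ := Function.ne_iff.1 hab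
    rw [f.zero_of_le_dist, Complex.ofReal_zero]
    refine le_trans ?_ (dist_le_pi_dist _ _ i)
    have h1 : (1 : ℝ) ≤ |(a i : ℝ) - b i| := by
      exact_mod_cast Int.one_le_abs (sub_ne_zero.2 hi)
    rw [Real.dist_eq, show π * ℏ * (2 * (a i : ℝ) - k i) - π * ℏ * (2 * (b i : ℝ) - k i) =
      π * ℏ * 2 * (a i - b i) by ring, abs_mul, abs_of_pos (by positivity)]
    change π * ℏ ≤ _
    nlinarith

/-- The operator-norm closure of the span of the T_{k,g,ℏ} (g Schwartz) is exactly the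
set of compact operators on ℓ²(ℤⁿ). -/
theorem stmt_7 (n : ℕ) (hn : 1 ≤ n) (ℏ : ℝ) (hℏ : 0 < ℏ) :
    closure (↑(Submodule.span ℂ
      {T : ℓ2 n →L[ℂ] ℓ2 n | ∃ (k : Fin n → ℤ) (g : SchwartzMap (Fin n → ℝ) ℂ),
        ∀ (φ : ℓ2 n) (a : Fin n → ℤ),
          (T φ) a = g (fun i => π * ℏ * (2 * (a i : ℝ) - (k i : ℝ))) * φ (a - k)})
      : Set (ℓ2 n →L[ℂ] ℓ2 n)) =
    {T : ℓ2 n →L[ℂ] ℓ2 n | IsCompactOperator T} := by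
  apply Set.Subset.antisymm
  · refine closure_minimal ?_ isClosed_setOfPred_isCompactOperator
    change Submodule.span ℂ _ ≤ compactOperator (RingHom.id ℂ) (ℓ2 n) (ℓ2 n)
    refine Submodule.span_le.2 ?_
    rintro T ⟨k, g, hT⟩
    exact isCompactOperator_of_tendsto_zero (Equiv.subRight k) hT
      (g.tendsto_cocompact.comp (tendsto_scaled_lattice n hℏ k))
  · intro T hT
    rw [← Submodule.topologicalClosure_coe]
    refine mem_of_isCompactOperator (Submodule.isClosed_topologicalClosure _) (fun a b => ?_) hT
    refine Submodule.le_topologicalClosure _ (Submodule.subset_span ?_)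
    obtain ⟨g, hg⟩ := exists_schwartzMap_lattice n hℏ (a - b) a
    refine ⟨a - b, g, fun φ c => ?_⟩
    rw [hg, matrixUnit_apply]
    by_cases h : c = a
    · subst h; simp
    · simp [h]
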